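/- Let p be a prime and G a finite p-group which admits a faithful irreducible representation on an N-dimensional rational vector space (N ≥ 1). Then F(G) ≤ ν_p(N) + 1, where F denotes the Frattini length and ν_p the p-adic valuation. -/

import Mathlib

/-- The iterated Frattini series: `Φ⁰(G) = G` and `Φⁿ⁺¹(G) = Φ(Φⁿ(G))`,
viewed as subgroups of `G`. -/
def frattiniSeries (G : Type*) [Group G] : ℕ → Subgroup G
  | 0 => ⊤
  | n + 1 => (frattini (frattiniSeries G n)).map (frattiniSeries G n).subtype

/-- The Frattini length: the least `n` with `Φⁿ(G) = {1}`. -/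
noncomputable def frattiniLength (G : Type*) [Group G] : ℕ :=
  sInf {n | frattiniSeries G n = ⊥}

/-- A representation is irreducible if the space is nonzero and the only invariant
subspaces are `⊥` and `⊤`. -/
def Representation.IsIrreducibleRep {k G V : Type*} [CommSemiring k] [Monoid G]
    [AddCommMonoid V] [Module k V] (ρ : Representation k G V) : Prop :=
  Nontrivial V ∧ ∀ W : Submodule k V, (∀ g : G, W.map (ρ g) ≤ W) → W = ⊥ ∨ W = ⊤


/-! ### The subgroup generated by p-th powers and commutators -/

/-- Subgroup generated by `p`-th powers and commutators of elements of `H`. -/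
def pfrat {G : Type*} [Group G] (p : ℕ) (H : Subgroup G) : Subgroup G :=
  Subgroup.closure ({g | ∃ h ∈ H, g = h ^ p} ∪ {g | ∃ h ∈ H, ∃ k ∈ H, g = h * k * h⁻¹ * k⁻¹})

/-- Iterates of `pfrat`. -/
def pfratIter {G : Type*} [Group G] (p : ℕ) (H : Subgroup G) : ℕ → Subgroup G
  | 0 => H
  | n + 1 => pfrat p (pfratIter p H n)

section pfratBasics
variable {G : Type*} [Group G] {p : ℕ}

lemma pfrat_le {H K : Subgroup G} (h1 : ∀ h ∈ H, h ^ p ∈ K)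
    (h2 : ∀ h ∈ H, ∀ k ∈ H, h * k * h⁻¹ * k⁻¹ ∈ K) : pfrat p H ≤ K := by
  unfold pfrat
  rw [Subgroup.closure_le]
  rintro g (⟨h, hh, rfl⟩ | ⟨h, hh, k, hk, rfl⟩)
  · exact h1 h hh
  · exact h2 h hh k hk

lemma pow_mem_pfrat {H : Subgroup G} {h : G} (hh : h ∈ H) : h ^ p ∈ pfrat p H :=
  Subgroup.subset_closure (Or.inl ⟨h, hh, rfl⟩)

lemma comm_mem_pfrat {H : Subgroup G} {h k : G} (hh : h ∈ H) (hk : k ∈ H) :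
    h * k * h⁻¹ * k⁻¹ ∈ pfrat p H :=
  Subgroup.subset_closure (Or.inr ⟨h, hh, k, hk, rfl⟩)

lemma pfrat_mono {H K : Subgroup G} (h : H ≤ K) : pfrat p H ≤ pfrat p K :=
  pfrat_le (fun _ hx => pow_mem_pfrat (h hx)) (fun _ hx _ hy => comm_mem_pfrat (h hx) (h hy))

lemma pfratIter_mono {H K : Subgroup G} (h : H ≤ K) (n : ℕ) :
    pfratIter p H n ≤ pfratIter p K n := by
  induction n with
  | zero => exact h
  | succ n ih => exact pfrat_mono ih

lemma pfratIter_add (H : Subgroup G) (m n : ℕ) :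
    pfratIter p H (m + n) = pfratIter p (pfratIter p H m) n := by
  induction n with
  | zero => rfl
  | succ n ih => rw [← add_assoc]; simp only [pfratIter, ih]

lemma pfrat_le_self (H : Subgroup G) : pfrat p H ≤ H :=
  pfrat_le (fun _ hx => H.pow_mem hx _)
    (fun _ hx _ hy => H.mul_mem (H.mul_mem (H.mul_mem hx hy) (H.inv_mem hx)) (H.inv_mem hy))

lemma pfratIter_le_self (H : Subgroup G) (n : ℕ) : pfratIter p H n ≤ H := by
  induction n with
  | zero => exact le_rfl
  | succ n ih => exact (pfrat_le_self _).trans ih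

lemma map_pfrat_le {G' : Type*} [Group G'] (f : G →* G') (H : Subgroup G) :
    (pfrat p H).map f ≤ pfrat p (H.map f) := by
  rw [Subgroup.map_le_iff_le_comap]
  refine pfrat_le (fun x hx => ?_) (fun x hx y hy => ?_)
  · rw [Subgroup.mem_comap, map_pow]
    exact pow_mem_pfrat (Subgroup.mem_map_of_mem f hx)
  · rw [Subgroup.mem_comap, map_mul, map_mul, map_mul, map_inv, map_inv]
    exact comm_mem_pfrat (Subgroup.mem_map_of_mem f hx) (Subgroup.mem_map_of_mem f hy)

lemma map_pfratIter_le {G' : Type*} [Group G'] (f : G →* G') (H : Subgroup G) (n : ℕ) :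
    (pfratIter p H n).map f ≤ pfratIter p (H.map f) n := by
  induction n with
  | zero => exact le_rfl
  | succ n ih => exact (map_pfrat_le f _).trans (pfrat_mono ih)

lemma pfrat_le_map {G' : Type*} [Group G'] (f : G →* G') (H : Subgroup G) :
    pfrat p (H.map f) ≤ (pfrat p H).map f := by
  refine pfrat_le ?_ ?_
  · rintro _ ⟨x, hx, rfl⟩
    exact ⟨x ^ p, pow_mem_pfrat hx, by simp⟩
  · rintro _ ⟨x, hx, rfl⟩ _ ⟨y, hy, rfl⟩
    exact ⟨_, comm_mem_pfrat hx hy, by simp⟩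

lemma pfratIter_le_map {G' : Type*} [Group G'] (f : G →* G') (H : Subgroup G) (n : ℕ) :
    pfratIter p (H.map f) n ≤ (pfratIter p H n).map f := by
  induction n with
  | zero => exact le_rfl
  | succ n ih => exact (pfrat_mono ih).trans (pfrat_le_map f _)

lemma conj_mem_pfratIter_top (n : ℕ) {x : G} (hx : x ∈ pfratIter p (⊤ : Subgroup G) n) (g : G) :
    g * x * g⁻¹ ∈ pfratIter p (⊤ : Subgroup G) n := by
  have h := map_pfratIter_le (p := p) (MulAut.conj g).toMonoidHom (⊤ : Subgroup G) n
  have h2 := h (Subgroup.mem_map_of_mem _ hx)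
  exact pfratIter_mono le_top n (by simpa using h2)

lemma frattini_le_pfrat [Finite G] (hp : p.Prime) : frattini G ≤ pfrat p (⊤ : Subgroup G) := by
  intro x hx
  by_contra hxD
  obtain ⟨K, ⟨hDK, hxK⟩, hmax⟩ := Set.Finite.exists_maximal
    (s := {K : Subgroup G | pfrat p (⊤ : Subgroup G) ≤ K ∧ x ∉ K}) (Set.toFinite _)
    ⟨_, le_rfl, hxD⟩
  have hKn : K.Normal := ⟨fun n hn g => by
    have := K.mul_mem (hDK (comm_mem_pfrat (p := p) (Subgroup.mem_top g) (Subgroup.mem_top n))) hn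
    simpa using this⟩
  have key : ∀ y : G, y ∈ K ⊔ Subgroup.zpowers x := by
    intro y
    by_cases hy : y ∈ K
    · exact Subgroup.mem_sup_left hy
    have hx2 : x ∈ K ⊔ Subgroup.zpowers y := by
      by_contra hcon
      have := hmax (y := K ⊔ Subgroup.zpowers y) ⟨hDK.trans le_sup_left, hcon⟩ le_sup_left
      exact hy (this (Subgroup.mem_sup_right (Subgroup.mem_zpowers y)))
    rw [Subgroup.mem_sup_of_normal_left] at hx2
    obtain ⟨k, hk, _, ⟨i, rfl⟩, hki⟩ := hx2
    simp only at hki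
    have hyp : y ^ p ∈ K := hDK (pow_mem_pfrat (Subgroup.mem_top y))
    have hi : ¬ (p : ℤ) ∣ i := by
      rintro ⟨j, rfl⟩
      apply hxK
      rw [← hki, zpow_mul]
      exact K.mul_mem hk (K.zpow_mem (by simpa using hyp) _)
    have hcop : IsCoprime (p : ℤ) i :=
      (Prime.coprime_iff_not_dvd (Nat.prime_iff_prime_int.mp hp)).2 hi
    obtain ⟨a, b, hab⟩ := hcop
    have h1 : y ^ i ∈ K ⊔ Subgroup.zpowers x := by
      have : y ^ i = k⁻¹ * x := by rw [← hki]; group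
      rw [this]
      exact Subgroup.mul_mem _ (Subgroup.mem_sup_left (K.inv_mem hk))
        (Subgroup.mem_sup_right (Subgroup.mem_zpowers x))
    have h2 : y = (y ^ p) ^ a * (y ^ i) ^ b := by
      rw [← zpow_natCast, ← zpow_mul, ← zpow_mul, ← zpow_add]
      have : (p : ℤ) * a + i * b = 1 := by linarith
      rw [this, zpow_one]
    rw [h2]
    exact Subgroup.mul_mem _ (Subgroup.mem_sup_left (K.zpow_mem hyp _)) (Subgroup.zpow_mem _ h1 _)
  have hco : IsCoatom K := by
    refine ⟨fun h => hxK (h ▸ Subgroup.mem_top x), fun L hL => ?_⟩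
    have hxL : x ∈ L := by
      by_contra hcon
      exact hL.not_ge (hmax (y := L) ⟨hDK.trans hL.le, hcon⟩ hL.le)
    rw [eq_top_iff]
    intro y _
    have hle : K ⊔ Subgroup.zpowers x ≤ L :=
      sup_le hL.le (by rwa [Subgroup.zpowers_le])
    exact hle (key y)
  exact hxK (frattini_le_coatom hco hx)

lemma frattiniSeries_le [Finite G] (hp : p.Prime) (n : ℕ) :
    frattiniSeries G n ≤ pfratIter p (⊤ : Subgroup G) n := by
  induction n with
  | zero => exact le_rfl
  | succ n ih =>
    simp only [frattiniSeries, pfratIter]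
    refine (Subgroup.map_mono (frattini_le_pfrat hp)).trans ?_
    refine (map_pfrat_le _ _).trans (pfrat_mono ?_)
    refine le_trans ?_ ih
    rintro _ ⟨x, _, rfl⟩
    exact x.2

lemma pfrat_le_of_relIndex (hp : p.Prime) [Finite G] (hG : IsPGroup p G) {M K : Subgroup G}
    (h : M ≤ K) (hi : M.relIndex K = p) : pfrat p K ≤ M := by
  have : Fact p.Prime := ⟨hp⟩
  have hn : (M.subgroupOf K).Normal := by
    apply Subgroup.normal_of_index_eq_minFac_card
    obtain ⟨n, hn⟩ := IsPGroup.iff_card.1 (hG.to_subgroup K)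
    have hd : p ∣ Nat.card K := by
      rw [← hi]; exact Subgroup.index_dvd_card (M.subgroupOf K)
    have hn0 : n ≠ 0 := by
      rintro rfl
      rw [hn, pow_zero, Nat.dvd_one] at hd
      exact hp.one_lt.ne' hd
    rw [hn, hp.pow_minFac hn0]
    exact hi
  have hc : Nat.card (K ⧸ M.subgroupOf K) = p := hi
  have : IsCyclic (K ⧸ M.subgroupOf K) := isCyclic_of_prime_card hc
  refine pfrat_le (fun x hx => ?_) (fun x hx y hy => ?_)
  · have : ((⟨x, hx⟩ : K) ^ p) ∈ M.subgroupOf K := by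
      rw [← QuotientGroup.eq_one_iff, QuotientGroup.mk_pow, ← hc, pow_card_eq_one']
    exact this
  · have : ((⟨x, hx⟩ : K) * ⟨y, hy⟩ * ⟨x, hx⟩⁻¹ * ⟨y, hy⟩⁻¹) ∈ M.subgroupOf K := by
      rw [← QuotientGroup.eq_one_iff]
      simp only [QuotientGroup.mk_mul, QuotientGroup.mk_inv]
      have hcm := IsCyclic.isMulCommutative (α := K ⧸ M.subgroupOf K)
      rw [mul_comm' (QuotientGroup.mk (⟨x, hx⟩ : K) : K ⧸ M.subgroupOf K)
        (QuotientGroup.mk (⟨y, hy⟩ : K))]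
      group
    exact this

lemma pfratIter_le_of_index (hp : p.Prime) [Finite G] (hG : IsPGroup p G) (e : ℕ) :
    ∀ M : Subgroup G, M.index = p ^ e → pfratIter p (⊤ : Subgroup G) e ≤ M := by
  have : Fact p.Prime := ⟨hp⟩
  induction e with
  | zero =>
    intro M hM
    rw [pow_zero, Subgroup.index_eq_one] at hM
    rw [hM]; exact le_top
  | succ e ih =>
    intro M hM
    obtain ⟨m, hm⟩ := IsPGroup.iff_card.1 (hG.to_subgroup M)
    have hc := M.card_mul_index
    obtain ⟨K, hK, hMK⟩ := Sylow.exists_subgroup_card_pow_succ (p := p) (n := m) (G := G)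
      (by rw [← hc, hm, hM, ← pow_add]; exact pow_dvd_pow _ (by omega)) hm
    have hr : M.relIndex K = p := by
      have h1 := Subgroup.relIndex_mul_index hMK
      have h2 := K.card_mul_index
      rw [← hc, ← h1, hK, hm, pow_succ, mul_assoc] at h2
      have h3 := Nat.eq_of_mul_eq_mul_left (pow_pos hp.pos m) h2
      exact (Nat.eq_of_mul_eq_mul_right (Nat.pos_of_ne_zero K.index_ne_zero_of_finite) h3).symm
    have hKi : K.index = p ^ e := by
      have := Subgroup.relIndex_mul_index hMK
      rw [hr, hM, pow_succ, mul_comm] at this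
      exact Nat.eq_of_mul_eq_mul_right hp.pos this
    exact (pfrat_mono (ih K hKi)).trans (pfrat_le_of_relIndex hp hG hMK hr)

end pfratBasics

/-! ### Group theory of `p`-groups whose abelian normal subgroups are cyclic -/

section grp
variable {G : Type*} [Group G] {p : ℕ}

lemma exists_central_of_normal (hp : p.Prime) [Finite G] (hG : IsPGroup p G) (N : Subgroup G)
    (hN : N.Normal) (hN1 : N ≠ ⊥) : ∃ z ∈ N, z ≠ 1 ∧ ∀ g : G, g * z = z * g := by
  have : Fact p.Prime := ⟨hp⟩
  have hP : IsPGroup p (ConjAct G) := hG.of_equiv ConjAct.toConjAct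
  have hd : p ∣ Nat.card N := by
    have hnt : Nontrivial N := (Subgroup.nontrivial_iff_ne_bot N).2 hN1
    obtain ⟨n, hn, hc⟩ := (IsPGroup.nontrivial_iff_card (hG.to_subgroup N)).1 hnt
    rw [hc]; exact dvd_pow_self p hn.ne'
  obtain ⟨b, hb, hb1⟩ := hP.exists_fixed_point_of_prime_dvd_card_of_fixed_point N hd (a := 1)
    (by intro g; exact smul_one g)
  refine ⟨b, b.2, fun h => hb1 (Subtype.ext h.symm), fun g => ?_⟩
  have := congrArg Subtype.val (hb (ConjAct.toConjAct g))
  rw [ConjAct.Subgroup.val_conj_smul, ConjAct.toConjAct_smul] at this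
  exact mul_inv_eq_iff_eq_mul.1 this

lemma exists_self_centralizing (hp : p.Prime) [Finite G] (hG : IsPGroup p G) :
    ∃ A : Subgroup G, A.Normal ∧ (∀ a ∈ A, ∀ b ∈ A, a * b = b * a) ∧
      ∀ g : G, (∀ a ∈ A, g * a = a * g) → g ∈ A := by
  obtain ⟨A, ⟨hAn, hAc⟩, hmax⟩ := Set.Finite.exists_maximal
    (s := {A : Subgroup G | A.Normal ∧ ∀ a ∈ A, ∀ b ∈ A, a * b = b * a}) (Set.toFinite _)
    ⟨⊥, inferInstance, by
      intro a ha b hb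
      rw [Subgroup.mem_bot] at ha hb
      rw [ha, hb]⟩
  refine ⟨A, hAn, hAc, fun g hg => ?_⟩
  by_contra hgA
  let C : Subgroup G := Subgroup.centralizer (A : Set G)
  have hC : ∀ y, y ∈ C ↔ ∀ a ∈ A, y * a = a * y := by
    intro y
    simp only [C, Subgroup.mem_centralizer_iff]
    exact ⟨fun h a ha => (h a ha).symm, fun h a ha => (h a ha).symm⟩
  have hCn : C.Normal := inferInstance
  have hCb : (C.map (QuotientGroup.mk' A)).Normal :=
    hCn.map _ (QuotientGroup.mk'_surjective A)
  obtain ⟨z, hz, hz1, hzc⟩ := exists_central_of_normal hp (hG.to_quotient A)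
    (C.map (QuotientGroup.mk' A)) hCb (by
      intro h
      have : (QuotientGroup.mk' A g) ∈ C.map (QuotientGroup.mk' A) :=
        Subgroup.mem_map_of_mem _ ((hC g).2 hg)
      rw [h, Subgroup.mem_bot] at this
      exact hgA ((QuotientGroup.eq_one_iff g).1 this))
  obtain ⟨y, hy, rfl⟩ := hz
  have hyA : y ∉ A := fun h => hz1 ((QuotientGroup.eq_one_iff y).2 h)
  have hyc : ∀ a ∈ A, y * a = a * y := (hC y).1 hy
  have hcom : ∀ g : G, g * y * g⁻¹ * y⁻¹ ∈ A := by
    intro g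
    rw [← QuotientGroup.eq_one_iff]
    have := hzc (QuotientGroup.mk' A g)
    simp only [QuotientGroup.mk'_apply] at this
    simp only [QuotientGroup.mk_mul, QuotientGroup.mk_inv]
    rw [this]; group
  have hL : A ⊔ Subgroup.zpowers y ≤ A := by
    apply hmax _ le_sup_left
    constructor
    · refine ⟨fun l hl h => ?_⟩
      rw [Subgroup.mem_sup_of_normal_left] at hl
      obtain ⟨a, ha, _, ⟨i, rfl⟩, rfl⟩ := hl
      have h1 : h * (a * y ^ i) * h⁻¹ = (h * a * h⁻¹) * ((h * y * h⁻¹ * y⁻¹) * y) ^ i := by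
        have : (h * y * h⁻¹ * y⁻¹) * y = h * y * h⁻¹ := by group
        rw [this, conj_zpow]; group
      simp only
      rw [h1]
      refine Subgroup.mul_mem _ (Subgroup.mem_sup_left (hAn.conj_mem a ha h)) ?_
      exact Subgroup.zpow_mem _ (Subgroup.mul_mem _ (Subgroup.mem_sup_left (hcom h))
        (Subgroup.mem_sup_right (Subgroup.mem_zpowers y))) _
    · intro l hl m hm
      rw [Subgroup.mem_sup_of_normal_left] at hl hm
      obtain ⟨a, ha, _, ⟨i, rfl⟩, rfl⟩ := hl
      obtain ⟨b, hb, _, ⟨j, rfl⟩, rfl⟩ := hm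
      have c1 : Commute y a := hyc a ha
      have c2 : Commute y b := hyc b hb
      have c3 : Commute a b := hAc a ha b hb
      exact ((c3.mul_right (c1.zpow_left j).symm).mul_left
        ((c2.zpow_left i).mul_right ((Commute.refl y).zpow_zpow i j)))
  exact hyA (hL (Subgroup.mem_sup_right (Subgroup.mem_zpowers y)))

lemma conj_zpow_of {g x : G} {a : ℤ} (h : g * x * g⁻¹ = x ^ a) (k : ℤ) :
    g * x ^ k * g⁻¹ = x ^ (a * k) := by
  rw [← conj_zpow, h, zpow_mul]

lemma mul_pow_geom {g x : G} {a : ℤ} (h : g * x * g⁻¹ = x ^ a) (i : ℤ) (m : ℕ) :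
    (x ^ i * g) ^ m = x ^ (i * ∑ j ∈ Finset.range m, a ^ j) * g ^ m := by
  induction m with
  | zero => simp
  | succ m ih =>
    rw [pow_succ', ih, geom_sum_succ, pow_succ']
    have h1 := conj_zpow_of h (i * ∑ j ∈ Finset.range m, a ^ j)
    have h2 : g * x ^ (i * ∑ j ∈ Finset.range m, a ^ j)
        = x ^ (a * (i * ∑ j ∈ Finset.range m, a ^ j)) * g := by
      rw [← h1]; group
    calc x ^ i * g * (x ^ (i * ∑ j ∈ Finset.range m, a ^ j) * g ^ m)
        = x ^ i * (g * x ^ (i * ∑ j ∈ Finset.range m, a ^ j)) * g ^ m := by group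
      _ = x ^ i * (x ^ (a * (i * ∑ j ∈ Finset.range m, a ^ j)) * g) * g ^ m := by rw [h2]
      _ = (x ^ i * x ^ (a * (i * ∑ j ∈ Finset.range m, a ^ j))) * (g * g ^ m) := by group
      _ = _ := by
        rw [← zpow_add]; congr 2; ring

lemma pow_mem_of_cent (hp : p.Prime) {n : ℕ} {x : G} (hx : orderOf x = p ^ n)
    (hcent : ∀ g : G, g * x = x * g → g ∈ Subgroup.zpowers x) {g : G}
    (hg : g ∉ Subgroup.zpowers x) {m : ℤ} (hm : x ^ m = g ^ p) : (p : ℤ) ∣ m := by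
  by_contra hpm
  apply hg
  apply hcent
  have hcop : IsCoprime (p : ℤ) m :=
    (Prime.coprime_iff_not_dvd (Nat.prime_iff_prime_int.mp hp)).2 hpm
  obtain ⟨u, v, huv⟩ := (hcop.pow_left (m := n))
  have h1 : x = (g ^ p) ^ v := by
    have h2 : (p : ℤ) ^ n * u + m * v = 1 := by linarith
    have h3 : x ^ ((p : ℤ) ^ n * u + m * v) = x := by rw [h2, zpow_one]
    rw [zpow_add, zpow_mul, zpow_mul, hm] at h3
    have h4 : x ^ ((p : ℤ) ^ n) = 1 := by
      rw [← Nat.cast_pow, zpow_natCast, ← hx, pow_orderOf_eq_one]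
    rw [h4, one_zpow, one_mul] at h3
    exact h3.symm
  have c : Commute g ((g ^ p) ^ v) := ((Commute.refl g).pow_right p).zpow_right v
  rw [← h1] at c
  exact c

lemma mem_zpowers_of_isCyclic (hp : p.Prime) {E : Type*} [Group E] [Finite E] [IsCyclic E]
    {z h : E} (hz : z ^ p = 1) (hz1 : z ≠ 1) (hh : h ^ p = 1) : h ∈ Subgroup.zpowers z := by
  classical
  have : Fact p.Prime := ⟨hp⟩
  have := Fintype.ofFinite E
  have hc := IsCyclic.card_pow_eq_one_le (α := E) hp.pos
  have ho : orderOf z = p := orderOf_eq_prime hz hz1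
  have hsub : (Subgroup.zpowers z : Set E).toFinset ⊆ Finset.univ.filter (fun a : E => a ^ p = 1) := by
    intro y hy
    rw [Set.mem_toFinset] at hy
    obtain ⟨i, rfl⟩ := hy
    simp only [Finset.mem_filter, Finset.mem_univ, true_and]
    rw [← zpow_natCast, ← zpow_mul, mul_comm, zpow_mul, zpow_natCast, hz, one_zpow]
  have hcard : (Subgroup.zpowers z : Set E).toFinset.card = p := by
    rw [Set.toFinset_card, ← Nat.card_eq_fintype_card]
    exact (Nat.card_zpowers z).trans ho
  have heq := Finset.eq_of_subset_of_card_le hsub (by rw [hcard]; exact hc)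
  have : h ∈ (Subgroup.zpowers z : Set E).toFinset := by
    rw [heq]; simpa using hh
  rwa [Set.mem_toFinset] at this

lemma no_extra (hp : p.Prime) [Finite G] {n : ℕ} {x : G} (hx : orderOf x = p ^ n)
    (hnorm : ∀ g : G, ∃ a : ℤ, g * x * g⁻¹ = x ^ a)
    (hcent : ∀ g : G, g * x = x * g → g ∈ Subgroup.zpowers x)
    (hcyc : ∀ E : Subgroup G, E.Normal → (∀ a ∈ E, ∀ b ∈ E, a * b = b * a) → IsCyclic E)
    {g : G} {a s : ℤ} (hga : g * x * g⁻¹ = x ^ a) (hS : ∑ j ∈ Finset.range p, a ^ j = p * s)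
    (hs : ¬ (p : ℤ) ∣ s) (hpa : (p : ℤ) ∣ a - 1) (hgp : g ^ p ∈ Subgroup.zpowers x) :
    g ∈ Subgroup.zpowers x := by
  have hpz : Prime (p : ℤ) := Nat.prime_iff_prime_int.mp hp
  have hx1 : ∀ k : ℤ, x ^ k = 1 ↔ (p : ℤ) ^ n ∣ k := by
    intro k
    rw [← orderOf_dvd_iff_zpow_eq_one, hx, Nat.cast_pow]
  by_contra hg
  obtain ⟨m, hm⟩ := hgp
  simp only at hm
  obtain ⟨m', rfl⟩ := pow_mem_of_cent hp hx hcent hg hm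
  have hn : n ≠ 0 := by
    rintro rfl
    rw [pow_zero, orderOf_eq_one_iff] at hx
    apply hg
    apply hcent
    rw [hx, one_mul, mul_one]
  obtain ⟨n, rfl⟩ := Nat.exists_eq_succ_of_ne_zero hn
  have hcop : IsCoprime ((p : ℤ) ^ (n + 1)) s :=
    ((Prime.coprime_iff_not_dvd hpz).2 hs).pow_left
  obtain ⟨u, v, huv⟩ := hcop
  -- the element of order p
  obtain ⟨h, hh⟩ : ∃ h, h = x ^ (-(m' * v)) * g := ⟨_, rfl⟩
  have hhp : h ^ p = 1 := by
    rw [hh, mul_pow_geom hga, hS, ← hm, ← zpow_add, hx1]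
    refine ⟨p * m' * u, ?_⟩
    rw [Nat.succ_eq_add_one]
    linear_combination (-(p : ℤ) * m') * huv
  have hhA : h ∉ Subgroup.zpowers x := by
    intro hmem
    apply hg
    have : g = (x ^ (-(m' * v)))⁻¹ * h := by rw [hh]; group
    rw [this]
    exact Subgroup.mul_mem _ (Subgroup.inv_mem _ (Subgroup.zpow_mem _ (Subgroup.mem_zpowers x) _)) hmem
  have hha : h * x * h⁻¹ = x ^ a := by
    have : h * x * h⁻¹ = x ^ (-(m' * v)) * (g * x * g⁻¹) * (x ^ (-(m' * v)))⁻¹ := by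
      rw [hh]; group
    rw [this, hga]; group
  obtain ⟨z, hz⟩ : ∃ z, z = x ^ ((p : ℤ) ^ n) := ⟨_, rfl⟩
  have hzp : z ^ p = 1 := by
    rw [hz, ← zpow_natCast, ← zpow_mul, hx1, pow_succ]
  have hz1 : z ≠ 1 := by
    rw [hz, Ne, hx1]
    intro hd
    have := (pow_dvd_pow_iff hpz.ne_zero hpz.not_isUnit).1 hd
    omega
  have hzh : Commute h z := by
    have h1 := conj_zpow_of hha ((p : ℤ) ^ n)
    have h2 : x ^ (a * (p : ℤ) ^ n) = x ^ ((p : ℤ) ^ n) := by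
      rw [← mul_inv_eq_one, ← zpow_neg, ← zpow_add, hx1]
      obtain ⟨c, hc⟩ := hpa
      refine ⟨c, ?_⟩
      rw [pow_succ]
      linear_combination (p : ℤ) ^ n * hc
    rw [h2, ← hz] at h1
    exact mul_inv_eq_iff_eq_mul.1 h1
  let E : Subgroup G := Subgroup.closure {z, h}
  have hzE : z ∈ E := Subgroup.subset_closure (by simp)
  have hhE : h ∈ E := Subgroup.subset_closure (by simp)
  have hEc : ∀ a ∈ E, ∀ b ∈ E, a * b = b * a := by
    have h1 : IsMulCommutative E := Subgroup.isMulCommutative_closure (by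
      rintro y (rfl | rfl) w (rfl | rfl)
      · rfl
      · exact hzh.symm
      · exact hzh
      · rfl)
    exact fun a ha b hb => setLike_mul_comm ha hb
  have hEn : E.Normal := by
    have hgen : ∀ k : G, ∀ y ∈ E, k * y * k⁻¹ ∈ E := by
      intro k
      obtain ⟨b, hb⟩ := hnorm k
      have hle : E ≤ E.comap (MulAut.conj k).toMonoidHom := by
        rw [Subgroup.closure_le]
        rintro y (rfl | rfl)
        · change k * y * k⁻¹ ∈ E
          rw [hz, conj_zpow_of hb, mul_comm, zpow_mul, ← hz]
          exact E.zpow_mem hzE _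
        · change k * y * k⁻¹ ∈ E
          -- the commutator lies in the cyclic group
          have hc1 : k * y * k⁻¹ * y⁻¹ ∈ Subgroup.zpowers x := by
            apply hcent
            have e1 : (k * y) * x * (k * y)⁻¹ = x ^ (b * a) := by
              rw [mul_inv_rev, ← conj_zpow_of hb, ← hha]; group
            have e2 : (y * k) * x * (y * k)⁻¹ = x ^ (b * a) := by
              rw [mul_inv_rev, mul_comm b a, ← conj_zpow_of hha, ← hb]; group
            have e3 : (k * y) * x * (k * y)⁻¹ = (y * k) * x * (y * k)⁻¹ := e1.trans e2.symm
            have e4 : x = (k * y)⁻¹ * ((y * k) * x * (y * k)⁻¹) * (k * y) := by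
              rw [← e3]; group
            obtain ⟨w, hw⟩ : ∃ w, w = (y * k)⁻¹ * (k * y) := ⟨_, rfl⟩
            have e5 : Commute x w := by
              have : x = w⁻¹ * x * w := by
                rw [hw]
                calc x = _ := e4
                  _ = _ := by group
              change x * w = w * x
              calc x * w = w * (w⁻¹ * x * w) := by group
                _ = w * x := by rw [← this]
            obtain ⟨c, hc⟩ := hcent w e5.symm.eq
            have e6 : k * y * k⁻¹ * y⁻¹ = (y * k) * w * (y * k)⁻¹ := by
              rw [hw]; group
            have e7 : k * y * k⁻¹ * y⁻¹ = x ^ ((b * a) * c) := by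
              rw [e6, ← hc, conj_zpow_of e2]
            rw [e7]
            exact ((Commute.refl x).zpow_left _).eq
          obtain ⟨j, hj⟩ := hc1
          simp only at hj
          have hj2 : k * y * k⁻¹ = x ^ j * y := by rw [hj]; group
          have hj3 : (k * y * k⁻¹) ^ p = 1 := by rw [conj_pow, hhp]; group
          rw [hj2, mul_pow_geom hha, hhp, mul_one, hx1, hS] at hj3
          have hj4 : (p : ℤ) ^ n ∣ j := by
            have h5 : (p : ℤ) ^ n * p ∣ (j * s) * p := by
              rw [← pow_succ]
              convert hj3 using 1
              ring
            have h6 := (mul_dvd_mul_iff_right hpz.ne_zero).1 h5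
            exact IsCoprime.dvd_of_dvd_mul_right
              (((Prime.coprime_iff_not_dvd hpz).2 hs).pow_left) h6
          obtain ⟨c, rfl⟩ := hj4
          rw [hj2, zpow_mul, ← hz]
          exact E.mul_mem (E.zpow_mem hzE _) hhE
      exact fun y hy => hle hy
    exact ⟨fun y hy k => hgen k y hy⟩
  have hE := hcyc E hEn hEc
  have hmem := mem_zpowers_of_isCyclic hp (E := E) (z := ⟨z, hzE⟩) (h := ⟨h, hhE⟩)
    (Subtype.ext hzp) (fun h => hz1 (congrArg Subtype.val h)) (Subtype.ext hhp)
  obtain ⟨i, hi⟩ := hmem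
  have hi' : z ^ i = h := congrArg Subtype.val hi
  apply hhA
  rw [← hi', hz]
  exact Subgroup.zpow_mem _ (Subgroup.zpow_mem _ (Subgroup.mem_zpowers x) _) _

end grp

section grp2
variable {G : Type*} [Group G] {p : ℕ}

lemma geom_odd (hp : p.Prime) (hodd : p ≠ 2) {a : ℤ} (ha : (p : ℤ) ∣ a - 1) :
    ∃ s : ℤ, ∑ j ∈ Finset.range p, a ^ j = p * s ∧ ¬ (p : ℤ) ∣ s := by
  have hpz : Prime (p : ℤ) := Nat.prime_iff_prime_int.mp hp
  obtain ⟨b, hb⟩ := ha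
  have h := odd_sq_dvd_geom_sum₂_sub (R := ℤ) (a := 1) (b := b) (p := p) (hp.odd_of_ne_two hodd)
  obtain ⟨c, hc⟩ := h
  have ha : 1 + (p : ℤ) * b = a := by linarith
  simp only [one_pow, mul_one, ha] at hc
  refine ⟨1 + p * c, by linear_combination hc, fun hd => ?_⟩
  have : (p : ℤ) ∣ 1 := (dvd_add_left (dvd_mul_right _ _)).1 hd
  exact hpz.not_isUnit (isUnit_of_dvd_one this)

lemma geom_two {a : ℤ} (ha : (4 : ℤ) ∣ a - 1) :
    ∃ s : ℤ, ∑ j ∈ Finset.range 2, a ^ j = (2 : ℕ) * s ∧ ¬ ((2 : ℕ) : ℤ) ∣ s := by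
  obtain ⟨b, hb⟩ := ha
  refine ⟨1 + 2 * b, ?_, ?_⟩
  · simp [Finset.sum_range_succ]; linarith
  · push_cast; omega

lemma conj_pow_of {g x : G} {a : ℤ} (h : g * x * g⁻¹ = x ^ a) (m : ℕ) :
    g ^ m * x * (g ^ m)⁻¹ = x ^ (a ^ m) := by
  induction m with
  | zero => simp
  | succ m ih =>
    rw [pow_succ' a, ← conj_zpow_of h, ← ih, pow_succ' g]; group

lemma one_mod (hp : p.Prime) (hG : IsPGroup p G) {n : ℕ} {x : G}
    (hx : orderOf x = p ^ n) (hn : n ≠ 0) {g : G} {a : ℤ} (h : g * x * g⁻¹ = x ^ a) :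
    (p : ℤ) ∣ a - 1 := by
  have : Fact p.Prime := ⟨hp⟩
  obtain ⟨k, hk⟩ := isPGroup_iff_pow_pow_eq_one.1 hG g
  have h1 := conj_pow_of h (p ^ k)
  rw [hk, one_mul, inv_one, mul_one] at h1
  have h2 : x ^ (a ^ (p ^ k) - 1) = 1 := by
    rw [zpow_sub, ← h1, zpow_one, mul_inv_cancel]
  rw [← orderOf_dvd_iff_zpow_eq_one, hx, Nat.cast_pow] at h2
  have h3 : (p : ℤ) ∣ a ^ (p ^ k) - 1 := (dvd_pow_self _ hn).trans h2
  rw [← ZMod.intCast_zmod_eq_zero_iff_dvd] at h3 ⊢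
  push_cast at h3 ⊢
  rwa [ZMod.pow_card_pow] at h3

lemma cyclic_case (hp : p.Prime) [Finite G] (hG : IsPGroup p G)
    (hcyc : ∀ E : Subgroup G, E.Normal → (∀ a ∈ E, ∀ b ∈ E, a * b = b * a) → IsCyclic E) :
    ∃ (x : G) (n : ℕ), orderOf x = p ^ n ∧ (Subgroup.zpowers x).Normal ∧
      pfrat p (⊤ : Subgroup G) ≤ Subgroup.zpowers (x ^ p) ∧ (n = 0 → Subsingleton G) := by
  have : Fact p.Prime := ⟨hp⟩
  obtain ⟨A, hAn, hAc, hAs⟩ := exists_self_centralizing hp hG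
  have hA := hcyc A hAn hAc
  obtain ⟨⟨x, hxA⟩, hxg⟩ := hA.exists_generator
  have hAx : A = Subgroup.zpowers x := by
    apply le_antisymm
    · intro y hy
      obtain ⟨i, hi⟩ := hxg ⟨y, hy⟩
      exact ⟨i, congrArg Subtype.val hi⟩
    · rwa [Subgroup.zpowers_le]
  subst hAx
  obtain ⟨n, hn⟩ := IsPGroup.iff_orderOf.1 hG x
  have hcent : ∀ g : G, g * x = x * g → g ∈ Subgroup.zpowers x := by
    intro g hg
    apply hAs
    rintro _ ⟨i, rfl⟩
    exact (Commute.zpow_right hg i)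
  have hnorm : ∀ g : G, ∃ a : ℤ, g * x * g⁻¹ = x ^ a := by
    intro g
    obtain ⟨a, ha⟩ := hAn.conj_mem x hxA g
    exact ⟨a, ha.symm⟩
  have hpow0 : ∀ g ∈ Subgroup.zpowers x, g ^ p ∈ Subgroup.zpowers (x ^ p) := by
    rintro _ ⟨i, rfl⟩
    refine ⟨i, ?_⟩
    simp only
    rw [← zpow_natCast, ← zpow_natCast, zpow_comm]
  refine ⟨x, n, hn, hAn, ?_, ?_⟩
  · -- descent
    have descent : ∀ (k : ℕ) (g : G), (∃ a : ℤ, g * x * g⁻¹ = x ^ a ∧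
        ∀ m : ℕ, ∃ s : ℤ, ∑ j ∈ Finset.range p, (a ^ m) ^ j = p * s ∧ ¬ (p : ℤ) ∣ s) →
        g ^ p ^ k ∈ Subgroup.zpowers x → g ∈ Subgroup.zpowers x := by
      intro k g hg
      obtain ⟨a, hga, hall⟩ := hg
      induction k with
      | zero => simp
      | succ k ih =>
        intro hk
        apply ih
        rcases Nat.eq_zero_or_pos n with h0 | h0
        · apply hcent
          have : x = 1 := by rw [← orderOf_eq_one_iff, hn, h0, pow_zero]
          rw [this]; simp
        have hc := conj_pow_of hga (p ^ k)
        obtain ⟨s, hs1, hs2⟩ := hall (p ^ k)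
        refine no_extra hp hn hnorm hcent hcyc hc hs1 hs2 (one_mod hp hG hn h0.ne' hc) ?_
        rw [← pow_mul, ← pow_succ]
        exact hk
    rcases Nat.eq_zero_or_pos n with h0 | h0
    · have hx1 : x = 1 := by rw [← orderOf_eq_one_iff, hn, h0, pow_zero]
      have hall : ∀ g : G, g = 1 := by
        intro g
        have := hcent g (by rw [hx1]; simp)
        rw [hx1] at this
        simpa using this
      intro g _
      rw [hall g]; exact Subgroup.one_mem _
    by_cases h2 : p = 2
    · subst h2
      have hsq : ∀ g : G, g ^ 2 ∈ Subgroup.zpowers (x ^ 2) := by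
        intro g
        by_cases hg : g ∈ Subgroup.zpowers x
        · exact hpow0 g hg
        obtain ⟨a, ha⟩ := hnorm g
        have hodd := one_mod hp hG hn h0.ne' ha
        have hg2 : g ^ 2 ∈ Subgroup.zpowers x := by
          obtain ⟨k, hk⟩ := isPGroup_iff_pow_pow_eq_one.1 hG (g ^ 2)
          refine descent k (g ^ 2) ⟨a ^ 2, conj_pow_of ha 2, fun m => geom_two ?_⟩ ?_
          · have h4 : (4 : ℤ) ∣ a ^ 2 - 1 := by
              obtain ⟨c, hc⟩ := hodd
              push_cast at hc
              exact ⟨c ^ 2 + c, by rw [show a = 2 * c + 1 by linarith]; ring⟩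
            exact h4.trans (by simpa using sub_dvd_pow_sub_pow (a ^ 2) 1 m)
          · rw [hk]; exact Subgroup.one_mem _
        obtain ⟨m, hm⟩ := hg2
        obtain ⟨c, rfl⟩ := pow_mem_of_cent hp hn hcent hg hm
        refine ⟨c, ?_⟩
        simp only at hm ⊢
        rw [← hm, zpow_mul, zpow_natCast]
      refine pfrat_le (fun h _ => hsq h) (fun h _ k _ => ?_)
      have : h * k * h⁻¹ * k⁻¹ = (h * k) ^ 2 * (k⁻¹ * h⁻¹ * k) ^ 2 * (k⁻¹) ^ 2 := by
        simp only [pow_two]; group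
      rw [this]
      exact Subgroup.mul_mem _ (Subgroup.mul_mem _ (hsq _) (hsq _)) (hsq _)
    · have hall : ∀ g : G, g ∈ Subgroup.zpowers x := by
        intro g
        obtain ⟨a, ha⟩ := hnorm g
        obtain ⟨k, hk⟩ := isPGroup_iff_pow_pow_eq_one.1 hG g
        refine descent k g ⟨a, ha, fun m => geom_odd hp h2 ?_⟩ ?_
        · exact (one_mod hp hG hn h0.ne' ha).trans (by simpa using sub_dvd_pow_sub_pow a 1 m)
        · rw [hk]; exact Subgroup.one_mem _
      refine pfrat_le (fun h _ => hpow0 h (hall h)) (fun h _ k _ => ?_)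
      rw [hAc h (hall h) k (hall k)]
      simp
  · intro h0
    have hx1 : x = 1 := by rw [← orderOf_eq_one_iff, hn, h0, pow_zero]
    refine ⟨fun g h => ?_⟩
    have e1 := hcent g (by rw [hx1]; simp)
    have e2 := hcent h (by rw [hx1]; simp)
    rw [hx1] at e1 e2
    simp only [Subgroup.zpowers_one_eq_bot, Subgroup.mem_bot] at e1 e2
    rw [e1, e2]

lemma pfratIter_zpowers (x : G) (n : ℕ) :
    pfratIter p (Subgroup.zpowers x) n ≤ Subgroup.zpowers (x ^ p ^ n) := by
  induction n with
  | zero => simp [pfratIter]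
  | succ n ih =>
    refine (pfrat_mono ih).trans (pfrat_le ?_ ?_)
    · rintro _ ⟨i, rfl⟩
      refine ⟨i, ?_⟩
      simp only
      rw [pow_succ, pow_mul, ← zpow_natCast, ← zpow_natCast, zpow_comm]
      exact zpow_natCast _ _
    · rintro _ ⟨i, rfl⟩ _ ⟨j, rfl⟩
      simp only
      rw [((Commute.refl (x ^ p ^ n)).zpow_zpow i j).eq]
      simp

end grp2

/-! ### Representation theory -/

section reps
variable {G V : Type*} [Group G] [AddCommGroup V] [Module ℚ V] {p : ℕ}

lemma dim_dvd (hp : p.Prime) [FiniteDimensional ℚ V] (T : Module.End ℚ V) (n : ℕ)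
    (h1 : T ^ p ^ (n + 1) = 1) (h2 : ∀ v, (T ^ p ^ n) v = v → v = 0) :
    p ^ n ∣ Module.finrank ℚ V := by
  have : Fact p.Prime := ⟨hp⟩
  let q : Polynomial ℚ := Polynomial.cyclotomic (p ^ (n + 1)) ℚ
  have hq0 : 0 < p ^ (n + 1) := pow_pos hp.pos _
  have hirr : Irreducible q := Polynomial.cyclotomic.irreducible_rat hq0
  have : Fact (Irreducible q) := ⟨hirr⟩
  have hT : Polynomial.aeval T q = 0 := by
    have h3 := Polynomial.cyclotomic_prime_pow_mul_X_pow_sub_one ℚ p n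
    have h4 := congrArg (Polynomial.aeval T) h3
    rw [mul_comm] at h4
    simp only [map_mul, map_sub, map_pow, Polynomial.aeval_X, map_one, h1, sub_self] at h4
    ext v
    have h5 := congrArg (fun f : Module.End ℚ V => f v) h4
    simp only [Module.End.mul_apply, LinearMap.sub_apply, LinearMap.zero_apply,
      Module.End.one_apply] at h5
    exact h2 _ (sub_eq_zero.1 h5)
  let f : AdjoinRoot q →ₐ[ℚ] Module.End ℚ V :=
    Ideal.Quotient.liftₐ (Ideal.span {q}) (Polynomial.aeval T) (by
      intro a ha
      obtain ⟨c, rfl⟩ := Ideal.mem_span_singleton.1 ha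
      rw [map_mul, hT, zero_mul])
  let : Module (AdjoinRoot q) V := Module.compHom V f.toRingHom
  have hsm : ∀ (k : AdjoinRoot q) (v : V), k • v = f k v := fun k v => rfl
  have : IsScalarTower ℚ (AdjoinRoot q) V := ⟨fun a k v => by
    rw [hsm, hsm, map_smul]; rfl⟩
  have hf := Module.finrank_mul_finrank ℚ (AdjoinRoot q) V
  rw [← hf]
  apply Dvd.dvd.mul_right
  have hd : Module.finrank ℚ (AdjoinRoot q) = q.natDegree := by
    rw [(AdjoinRoot.powerBasis hirr.ne_zero).finrank, AdjoinRoot.powerBasis_dim]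
  rw [hd, Polynomial.natDegree_cyclotomic, Nat.totient_prime_pow_succ hp]
  exact dvd_mul_right _ _

lemma isCyclic_of_free_comm {A : Type*} [CommGroup A] [Finite A] [Nontrivial V]
    (σ : Representation ℚ A V) (h : ∀ a : A, a ≠ 1 → ∀ v, σ a v = v → v = 0) : IsCyclic A := by
  have : Module.Finite ℚ (MonoidAlgebra ℚ A) := inferInstance
  have : IsNoetherianRing (MonoidAlgebra ℚ A) := IsNoetherianRing.of_finite ℚ _
  have : Nontrivial σ.asModule := ‹Nontrivial V›
  obtain ⟨P, hP⟩ := associatedPrimes.nonempty (MonoidAlgebra ℚ A) σ.asModule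
  have hPp : P.IsPrime := hP.isPrime
  obtain ⟨v, hv⟩ : ∃ v : σ.asModule, P = (⊥ : Submodule (MonoidAlgebra ℚ A) σ.asModule).colon {v} :=
    (isAssociatedPrime_iff.1 hP).2
  have hv0 : v ≠ 0 := by
    rintro rfl
    apply hPp.ne_top
    rw [hv, Ideal.eq_top_iff_one]
    simp [Submodule.mem_colon_singleton]
  let φ : A →* (MonoidAlgebra ℚ A ⧸ P) :=
    (Ideal.Quotient.mk P : MonoidAlgebra ℚ A →* _).comp (MonoidAlgebra.of ℚ A)
  apply isCyclic_of_injective_ringHom (R := MonoidAlgebra ℚ A ⧸ P) φ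
  intro a b hab
  have hab2 : MonoidAlgebra.of ℚ A a - MonoidAlgebra.of ℚ A b ∈ P := by
    rw [← Ideal.Quotient.eq]; exact hab
  rw [hv, Submodule.mem_colon_singleton, Submodule.mem_bot, sub_smul, sub_eq_zero] at hab2
  have h1 : σ a (σ.asModuleEquiv v) = σ b (σ.asModuleEquiv v) := by
    have := congrArg σ.asModuleEquiv hab2
    rwa [Representation.asModuleEquiv_map_smul, Representation.asModuleEquiv_map_smul,
      Representation.asAlgebraHom_of, Representation.asAlgebraHom_of] at this
  by_contra hne
  apply hv0
  apply σ.asModuleEquiv.injective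
  rw [map_zero]
  refine h (b⁻¹ * a) (fun h => hne (inv_mul_eq_one.1 h).symm) _ ?_
  rw [map_mul, Module.End.mul_apply, h1, ← Module.End.mul_apply, ← map_mul]
  simp

lemma isCyclic_of_free [Finite G] [Nontrivial V] (ρ : Representation ℚ G V) (A : Subgroup G)
    (hA : ∀ a ∈ A, ∀ b ∈ A, a * b = b * a)
    (h : ∀ a ∈ A, a ≠ 1 → ∀ v, ρ a v = v → v = 0) : IsCyclic A := by
  let _ : CommGroup A :=
    { (inferInstance : Group A) with mul_comm := fun a b => Subtype.ext (hA a a.2 b b.2) }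
  exact isCyclic_of_free_comm (ρ.comp A.subtype : Representation ℚ A V)
    (fun a ha v hv => h a a.2 (fun h => ha (Subtype.ext h)) v hv)

/-- vectors fixed by a subgroup -/
def fixSub (ρ : Representation ℚ G V) (B : Subgroup G) : Submodule ℚ V where
  carrier := {v | ∀ b ∈ B, ρ b v = v}
  add_mem' := fun {v w} hv hw b hb => by rw [map_add, hv b hb, hw b hb]
  zero_mem' := fun b _ => map_zero _
  smul_mem' := fun c v hv b hb => by rw [map_smul, hv b hb]

/-- sum over a subgroup -/
noncomputable def sumSub [Finite G] (ρ : Representation ℚ G V) (B : Subgroup G) : V →ₗ[ℚ] V :=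
  ∑ᶠ b : B, ρ b

/-- conjugate subgroup -/
def cj (g : G) (B : Subgroup G) : Subgroup G := B.map (MulAut.conj g).toMonoidHom

lemma mem_cj {g y : G} {B : Subgroup G} : y ∈ cj g B ↔ g⁻¹ * y * g ∈ B := by
  constructor
  · rintro ⟨b, hb, rfl⟩
    have : g⁻¹ * (g * b * g⁻¹) * g = b := by group
    simpa [this] using hb
  · intro h
    exact ⟨_, h, by simp [mul_assoc]⟩

lemma rho_inv_apply (ρ : Representation ℚ G V) (g : G) (v : V) : ρ g (ρ g⁻¹ v) = v := by
  rw [← Module.End.mul_apply, ← map_mul]; simp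

lemma map_fixSub (ρ : Representation ℚ G V) (g : G) (B : Subgroup G) {v : V}
    (hv : v ∈ fixSub ρ B) : ρ g v ∈ fixSub ρ (cj g B) := by
  intro b hb
  have h1 := hv _ (mem_cj.1 hb)
  have h2 : b * g = g * (g⁻¹ * b * g) := by group
  rw [← Module.End.mul_apply, ← map_mul, h2, map_mul, Module.End.mul_apply, h1]

lemma sumSub_apply [Finite G] (ρ : Representation ℚ G V) (B : Subgroup G) (v : V) :
    sumSub ρ B v = ∑ᶠ b : B, ρ b v := by
  have := Fintype.ofFinite B
  rw [sumSub, finsum_eq_sum_of_fintype, finsum_eq_sum_of_fintype, LinearMap.sum_apply]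

lemma sumSub_mem [Finite G] (ρ : Representation ℚ G V) (B : Subgroup G) (v : V) :
    sumSub ρ B v ∈ fixSub ρ B := by
  intro b hb
  have := Fintype.ofFinite B
  rw [sumSub_apply, finsum_eq_sum_of_fintype, map_sum]
  refine Fintype.sum_equiv (Equiv.mulLeft (⟨b, hb⟩ : B)) _ _ (fun c => ?_)
  rw [← Module.End.mul_apply, ← map_mul]; rfl

lemma sumSub_of_fix [Finite G] (ρ : Representation ℚ G V) (B : Subgroup G) {v : V}
    (hv : v ∈ fixSub ρ B) : sumSub ρ B v = (Nat.card B : ℚ) • v := by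
  have := Fintype.ofFinite B
  rw [sumSub_apply, finsum_eq_sum_of_fintype, Finset.sum_congr rfl (fun (b : B) _ => hv b.1 b.2)]
  simp [Nat.cast_smul_eq_nsmul]

lemma sumSub_mem_of_comm [Finite G] (ρ : Representation ℚ G V) {B C : Subgroup G} {v : V}
    (hBC : ∀ b ∈ B, ∀ c ∈ C, b * c = c * b)
    (hv : v ∈ fixSub ρ C) : sumSub ρ B v ∈ fixSub ρ C := by
  have := Fintype.ofFinite B
  rw [sumSub_apply, finsum_eq_sum_of_fintype]
  refine Submodule.sum_mem _ (fun b _ c hc => ?_)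
  rw [← Module.End.mul_apply, ← map_mul, ← hBC b b.2 c hc, map_mul, Module.End.mul_apply, hv c hc]

lemma fixSub_sup (ρ : Representation ℚ G V) {B C : Subgroup G} {v : V}
    (hB : v ∈ fixSub ρ B) (hC : v ∈ fixSub ρ C) : v ∈ fixSub ρ (B ⊔ C) := by
  let S : Subgroup G :=
    { carrier := {g | ρ g v = v}
      mul_mem' := fun {a b} ha hb => by
        change ρ (a * b) v = v
        rw [map_mul, Module.End.mul_apply, hb, ha]
      one_mem' := by simp
      inv_mem' := fun {a} ha => by
        change ρ a⁻¹ v = v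
        conv_lhs => rw [← show ρ a v = v from ha]
        rw [← Module.End.mul_apply, ← map_mul]; simp }
  have : B ⊔ C ≤ S := sup_le (fun b hb => hB b hb) (fun c hc => hC c hc)
  exact fun b hb => this hb

lemma fixSub_eq_bot_of_normal {ρ : Representation ℚ G V} (hf : Function.Injective ρ)
    (hirr : ρ.IsIrreducibleRep) {B : Subgroup G} (hB : B.Normal) (hB1 : B ≠ ⊥) :
    fixSub ρ B = ⊥ := by
  rcases hirr.2 (fixSub ρ B) (fun g => by
    rintro _ ⟨v, hv, rfl⟩
    intro b hb
    have h1 := map_fixSub ρ g B hv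
    refine h1 b (mem_cj.2 ?_)
    simpa using hB.conj_mem b hb g⁻¹) with h | h
  · exact h
  · exfalso
    apply hB1
    rw [eq_bot_iff]
    intro b hb
    rw [Subgroup.mem_bot]
    apply hf
    ext v
    have : v ∈ fixSub ρ B := h ▸ Submodule.mem_top
    rw [this b hb]; simp

end reps

section mainproof
variable {p : ℕ}

lemma mem_fixSub_zpowers {G V : Type*} [Group G] [AddCommGroup V] [Module ℚ V]
    (ρ : Representation ℚ G V) {a : G} {v : V} (h : ρ a v = v) :
    v ∈ fixSub ρ (Subgroup.zpowers a) := by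
  let S : Subgroup G :=
    { carrier := {g | ρ g v = v}
      mul_mem' := fun {a b} ha hb => by
        change ρ (a * b) v = v
        rw [map_mul, Module.End.mul_apply, hb, ha]
      one_mem' := by simp
      inv_mem' := fun {a} ha => by
        change ρ a⁻¹ v = v
        conv_lhs => rw [← show ρ a v = v from ha]
        rw [← Module.End.mul_apply, ← map_mul]; simp }
  have : Subgroup.zpowers a ≤ S := by
    rw [Subgroup.zpowers_le]; exact h
  exact fun b hb => this hb

/-- Imprimitive step: a noncyclic abelian normal subgroup gives a block decomposition. -/
lemma exists_block {G V : Type*} [Group G] [Finite G] [AddCommGroup V] [Module ℚ V]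
    [FiniteDimensional ℚ V] {ρ : Representation ℚ G V} (hf : Function.Injective ρ)
    (hirr : ρ.IsIrreducibleRep) {A : Subgroup G} (hAn : A.Normal)
    (hAc : ∀ a ∈ A, ∀ b ∈ A, a * b = b * a) (hA : ¬ IsCyclic A) :
    ∃ (M : Subgroup G) (W : Submodule ℚ V), M ≠ ⊤ ∧ (∀ m ∈ M, ∀ w ∈ W, ρ m w ∈ W) ∧
      W ≠ ⊥ ∧
      (∀ U : Submodule ℚ V, U ≤ W → (∀ m ∈ M, ∀ u ∈ U, ρ m u ∈ U) → U = ⊥ ∨ U = W) ∧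
      (⨆ g : G, W.map (ρ g)) = ⊤ ∧ Module.finrank ℚ V = M.index * Module.finrank ℚ W := by
  have hnt : Nontrivial V := hirr.1
  -- choose B
  obtain ⟨B, ⟨hBA, hBfix⟩, hmax⟩ := Set.Finite.exists_maximal
    (s := {B : Subgroup G | B ≤ A ∧ fixSub ρ B ≠ ⊥}) (Set.toFinite _)
    ⟨⊥, bot_le, by
      obtain ⟨v, hv⟩ := exists_ne (0 : V)
      intro h
      apply hv
      rw [← Submodule.mem_bot ℚ, ← h]
      intro b hb
      rw [Subgroup.mem_bot] at hb
      rw [hb]; simp⟩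
  have hB1 : B ≠ ⊥ := by
    rintro rfl
    apply hA
    apply isCyclic_of_free ρ A hAc
    intro a ha ha1 v hv
    by_contra hv0
    have hmem : Subgroup.zpowers a ≤ ⊥ := by
      apply hmax _ bot_le
      refine ⟨by rwa [Subgroup.zpowers_le], fun h => hv0 ?_⟩
      rw [← Submodule.mem_bot ℚ, ← h]
      exact mem_fixSub_zpowers ρ hv
    apply ha1
    have := hmem (Subgroup.mem_zpowers a)
    simpa using this
  have hcard : ∀ g, Nat.card (cj g B) = Nat.card B := fun g =>
    Subgroup.card_map_of_injective (MulAut.conj g).injective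
  have hcjA : ∀ g, cj g B ≤ A := by
    rintro g _ ⟨b, hb, rfl⟩
    exact hAn.conj_mem b (hBA hb) g
  have hcjmul : ∀ g h, cj (g * h) B = cj g (cj h B) := by
    intro g h
    ext y
    rw [mem_cj, mem_cj, mem_cj, mul_inv_rev]
    simp only [mul_assoc]
  -- different conjugates have trivial common fixed vectors
  have hdisj : ∀ g h, cj g B ≠ cj h B → ∀ v, v ∈ fixSub ρ (cj g B) → v ∈ fixSub ρ (cj h B) →
      v = 0 := by
    intro g h hne v hv hv'
    have hv2 := fixSub_sup ρ hv hv'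
    -- move to B
    have hv3 := map_fixSub ρ g⁻¹ _ hv2
    by_contra hv0
    have hsup : cj g⁻¹ (cj g B ⊔ cj h B) ≤ B := by
      apply hmax
      · refine ⟨?_, fun hbot => ?_⟩
        · rintro _ ⟨b, hb, rfl⟩
          exact hAn.conj_mem b (sup_le (hcjA g) (hcjA h) hb) g⁻¹
        · rw [hbot, Submodule.mem_bot] at hv3
          apply hv0
          rw [← rho_inv_apply ρ g v, hv3, map_zero]
      · intro b hb
        rw [mem_cj]
        apply Subgroup.mem_sup_left
        rw [mem_cj]
        simpa [mul_assoc] using hb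
    apply hne
    have hle : cj h B ≤ cj g B := by
      intro y hy
      rw [mem_cj]
      apply hsup
      rw [mem_cj]
      have : g⁻¹⁻¹ * (g⁻¹ * y * g) * g⁻¹ = y := by group
      rw [this]
      exact Subgroup.mem_sup_right hy
    exact (Subgroup.eq_of_le_of_card_ge hle (by rw [hcard, hcard])).symm
  have hkill : ∀ g h, cj g B ≠ cj h B → ∀ v, v ∈ fixSub ρ (cj h B) → sumSub ρ (cj g B) v = 0 := by
    intro g h hne v hv
    exact hdisj g h hne _ (sumSub_mem ρ _ v)
      (sumSub_mem_of_comm ρ (fun b hb c hc => hAc b (hcjA g hb) c (hcjA h hc)) hv)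
  have hcj1 : cj 1 B = B := by
    ext y; rw [mem_cj]; simp
  let M : Subgroup G := Subgroup.normalizer (B : Set G)
  have hnorm : ∀ g, g ∈ M ↔ cj g B = B := fun g => Subgroup.mem_normalizer_iff_map_conj_eq
  have htop : (⨆ g : G, (fixSub ρ B).map (ρ g)) = ⊤ := by
    rcases hirr.2 (⨆ g : G, (fixSub ρ B).map (ρ g)) (fun h => by
      rw [Submodule.map_iSup]
      refine iSup_le fun g => ?_
      refine le_trans ?_ (le_iSup _ (h * g))
      rintro _ ⟨_, ⟨v, hv, rfl⟩, rfl⟩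
      exact ⟨v, hv, by rw [map_mul, Module.End.mul_apply]⟩) with h | h
    · exfalso
      apply hBfix
      rw [eq_bot_iff, ← h]
      refine le_trans ?_ (le_iSup _ 1)
      intro v hv
      exact ⟨v, hv, by simp⟩
    · exact h
  refine ⟨M, fixSub ρ B, ?_, ?_, hBfix, ?_, htop, ?_⟩
  · intro h
    exact hBfix (fixSub_eq_bot_of_normal hf hirr (Subgroup.normalizer_eq_top_iff.1 h) hB1)
  · intro m hm w hw
    have := map_fixSub ρ m B hw
    rwa [(hnorm m).1 hm] at this
  · intro U hUW hU
    by_cases hU0 : U = ⊥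
    · exact Or.inl hU0
    right
    have hUtop : (⨆ g : G, U.map (ρ g)) = ⊤ := by
      rcases hirr.2 (⨆ g : G, U.map (ρ g)) (fun h => by
        rw [Submodule.map_iSup]
        refine iSup_le fun g => ?_
        refine le_trans ?_ (le_iSup _ (h * g))
        rintro _ ⟨_, ⟨v, hv, rfl⟩, rfl⟩
        exact ⟨v, hv, by rw [map_mul, Module.End.mul_apply]⟩) with h | h
      · exfalso
        apply hU0
        rw [eq_bot_iff, ← h]
        refine le_trans ?_ (le_iSup _ 1)
        intro v hv
        exact ⟨v, hv, by simp⟩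
      · exact h
    have hle : (⨆ g : G, U.map (ρ g)) ≤ U.comap (sumSub ρ B) := by
      refine iSup_le fun g => ?_
      rintro _ ⟨u, hu, rfl⟩
      rw [Submodule.mem_comap]
      by_cases hg : cj g B = B
      · have h1 := hU g ((hnorm g).2 hg) u hu
        rw [sumSub_of_fix ρ B (hUW h1)]
        exact U.smul_mem _ h1
      · have h1 := map_fixSub ρ g B (hUW hu)
        have h2 := hkill 1 g (by rw [hcj1]; exact fun h => hg h.symm) _ h1
        rw [hcj1] at h2
        rw [h2]; exact U.zero_mem
    apply le_antisymm hUW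
    intro v hv
    have h1 : v ∈ U.comap (sumSub ρ B) := hle (hUtop ▸ Submodule.mem_top)
    rw [Submodule.mem_comap, sumSub_of_fix ρ B hv] at h1
    have h0 : (Nat.card B : ℚ) ≠ 0 := by
      exact_mod_cast Nat.card_pos.ne'
    exact (U.smul_mem_iff h0).1 h1
  · -- dimension count
    classical
    let F : G ⧸ M → Submodule ℚ V := fun q => fixSub ρ (cj q.out B)
    have hFne : ∀ q q' : G ⧸ M, q ≠ q' → cj q.out B ≠ cj q'.out B := by
      intro q q' hne heq
      apply hne
      rw [← QuotientGroup.out_eq' q, ← QuotientGroup.out_eq' q', QuotientGroup.eq]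
      rw [hnorm, hcjmul, ← heq, ← hcjmul, inv_mul_cancel, hcj1]
    have hind : iSupIndep F := by
      intro q
      rw [Submodule.disjoint_def]
      intro v hv hv'
      have hle : (⨆ (j : G ⧸ M) (_ : j ≠ q), F j) ≤ LinearMap.ker (sumSub ρ (cj q.out B)) := by
        refine iSup_le fun j => iSup_le fun hj => ?_
        intro w hw
        rw [LinearMap.mem_ker]
        exact hkill _ _ (hFne _ _ hj.symm) w hw
      have h1 := hle hv'
      rw [LinearMap.mem_ker, sumSub_of_fix ρ _ hv] at h1
      have h0 : (Nat.card (cj q.out B) : ℚ) ≠ 0 := by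
        exact_mod_cast Nat.card_pos.ne'
      exact (smul_eq_zero.1 h1).resolve_left h0
    have hFtop : (⨆ q, F q) = ⊤ := by
      rw [eq_top_iff, ← htop]
      refine iSup_le fun g => ?_
      refine le_trans ?_ (le_iSup F (QuotientGroup.mk g))
      rintro _ ⟨v, hv, rfl⟩
      have h1 := map_fixSub ρ g B hv
      obtain ⟨m, hm⟩ := QuotientGroup.mk_out_eq_mul M g
      have h2 : cj (QuotientGroup.mk g : G ⧸ M).out B = cj g B := by
        rw [hm, hcjmul, (hnorm m).1 m.2]
      change _ ∈ fixSub ρ (cj (QuotientGroup.mk g : G ⧸ M).out B)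
      rwa [h2]
    have hFr : ∀ q, Module.finrank ℚ (F q) = Module.finrank ℚ (fixSub ρ B) := by
      intro q
      have hinj : Function.Injective (ρ q.out) := by
        intro a b hab
        have := congrArg (ρ (q.out)⁻¹) hab
        have e := rho_inv_apply ρ (q.out)⁻¹
        rw [inv_inv] at e
        rwa [e, e] at this
      have hmap : F q = (fixSub ρ B).map (ρ q.out) := by
        apply le_antisymm
        · intro v hv
          have h1 := map_fixSub ρ (q.out)⁻¹ _ hv
          rw [← hcjmul, inv_mul_cancel, hcj1] at h1
          exact ⟨_, h1, rho_inv_apply ρ _ v⟩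
        · rintro _ ⟨v, hv, rfl⟩
          exact map_fixSub ρ _ B hv
      rw [hmap]
      exact (Submodule.equivMapOfInjective _ hinj (fixSub ρ B)).finrank_eq.symm
    have hInternal := DirectSum.isInternal_submodule_of_iSupIndep_of_iSup_eq_top hind hFtop
    have := Fintype.ofFinite (G ⧸ M)
    let e := LinearEquiv.ofBijective (DirectSum.coeLinearMap F) hInternal
    rw [← e.finrank_eq, Module.finrank_directSum, Finset.sum_congr rfl (fun q _ => hFr q),
      Finset.sum_const, Finset.card_univ, smul_eq_mul, ← Nat.card_eq_fintype_card]
    rfl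

end mainproof

section final
variable {p : ℕ}

lemma main_ind (hp : p.Prime) (n : ℕ) : ∀ (G : Type*) [Group G] [Finite G] (_ : IsPGroup p G)
    (V : Type*) [AddCommGroup V] [Module ℚ V] [FiniteDimensional ℚ V]
    (ρ : Representation ℚ G V) (_ : ρ.IsIrreducibleRep) (_ : Nat.card G = n),
    ∀ g ∈ pfratIter p (⊤ : Subgroup G) ((Module.finrank ℚ V).factorization p + 1), ρ g = 1 := by
  induction n using Nat.strong_induction_on with
  | _ n ih =>
  intro G _ _ hG V _ _ _ ρ hirr hn g hg
  have hnt : Nontrivial V := hirr.1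
  by_cases hf : Function.Injective ρ
  swap
  · let K : Subgroup G := MonoidHom.ker ρ
    have hK : K ≠ ⊥ := fun h => hf ((MonoidHom.ker_eq_bot_iff ρ).1 h)
    let σ : Representation ℚ (G ⧸ K) V := QuotientGroup.lift K ρ le_rfl
    have hσ : ∀ x : G, σ (QuotientGroup.mk' K x) = ρ x := fun x => rfl
    have hσi : σ.IsIrreducibleRep := by
      refine ⟨hnt, fun W hW => hirr.2 W fun x => ?_⟩
      rw [← hσ]; exact hW _
    have hc : Nat.card (G ⧸ K) < n := by
      rw [← hn, Subgroup.card_eq_card_quotient_mul_card_subgroup K]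
      have h1 : 1 < Nat.card K := (Subgroup.one_lt_card_iff_ne_bot K).2 hK
      have h2 : 0 < Nat.card (G ⧸ K) := Nat.card_pos
      nlinarith
    rw [← hσ]
    apply ih _ hc (G ⧸ K) (hG.to_quotient K) V σ hσi rfl
    apply pfratIter_mono le_top _
    exact map_pfratIter_le (QuotientGroup.mk' K) ⊤ _ (Subgroup.mem_map_of_mem _ hg)
  by_cases hcyc : ∀ E : Subgroup G, E.Normal → (∀ a ∈ E, ∀ b ∈ E, a * b = b * a) → IsCyclic E
  · obtain ⟨x, m, hx, hxn, hle, hm0⟩ := cyclic_case hp hG hcyc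
    rcases m with _ | k
    · have := hm0 rfl
      rw [Subsingleton.elim g 1, map_one]
    have hN0 : Module.finrank ℚ V ≠ 0 := Module.finrank_pos.ne'
    have hz1 : x ^ p ^ k ≠ 1 := by
      intro h
      have h1 := orderOf_dvd_of_pow_eq_one h
      rw [hx] at h1
      have h2 := (Nat.pow_dvd_pow_iff_le_right hp.one_lt).1 h1
      omega
    have hzn : (Subgroup.zpowers (x ^ p ^ k)).Normal := by
      constructor
      rintro _ ⟨i, rfl⟩ h
      obtain ⟨j, hj⟩ := hxn.conj_mem x (Subgroup.mem_zpowers x) h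
      refine ⟨j * i, ?_⟩
      have hj' : x ^ j = h * x * h⁻¹ := hj
      have e : (x ^ p ^ k) ^ (j * i) = ((x ^ j) ^ (p ^ k)) ^ i := by
        simp only [← zpow_natCast, ← zpow_mul]
        congr 1
        ring
      change (x ^ p ^ k) ^ (j * i) = _
      rw [e, hj', conj_pow, conj_zpow]
    have hfix := fixSub_eq_bot_of_normal hf hirr hzn (by rwa [Ne, Subgroup.zpowers_eq_bot])
    have hdvd : p ^ k ∣ Module.finrank ℚ V := by
      refine dim_dvd hp (ρ x) k ?_ ?_
      · rw [← map_pow, ← hx, pow_orderOf_eq_one, map_one]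
      · intro v hv
        rw [← map_pow] at hv
        rw [← Submodule.mem_bot ℚ, ← hfix]
        exact mem_fixSub_zpowers ρ hv
    have hk : k ≤ (Module.finrank ℚ V).factorization p :=
      (hp.pow_dvd_iff_le_factorization hN0).1 hdvd
    obtain ⟨d, hd⟩ := Nat.exists_eq_add_of_le hk
    have hbot : pfratIter p (⊤ : Subgroup G) (1 + k) ≤ ⊥ := by
      rw [pfratIter_add]
      refine (pfratIter_mono (show pfratIter p (⊤ : Subgroup G) 1 ≤ _ from hle) k).trans ?_
      refine (pfratIter_zpowers (x ^ p) k).trans ?_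
      rw [← pow_mul, ← pow_succ', ← hx, pow_orderOf_eq_one]
      simp
    have h1 : g ∈ (⊥ : Subgroup G) := by
      apply hbot
      rw [hd, show k + d + 1 = (1 + k) + d by omega, pfratIter_add] at hg
      exact pfratIter_le_self _ _ hg
    rw [Subgroup.mem_bot.1 h1, map_one]
  · push Not at hcyc
    obtain ⟨A, hAn, hAc, hA⟩ := hcyc
    obtain ⟨M, W, hM, hMW, hW, hWirr, htop, hdim⟩ := exists_block hf hirr hAn hAc hA
    have : Fact p.Prime := ⟨hp⟩
    obtain ⟨e, he⟩ := hG.index M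
    let σ : Representation ℚ M W :=
      { toFun := fun m => (ρ (m : G)).restrict (fun w hw => hMW m m.2 w hw)
        map_one' := by
          ext w
          simp
        map_mul' := fun a b => by
          ext w
          simp [LinearMap.restrict_apply] }
    have hσ : ∀ (m : M) (w : W), ((σ m w : W) : V) = ρ (m : G) (w : V) := fun m w => rfl
    have hσi : σ.IsIrreducibleRep := by
      refine ⟨Submodule.nontrivial_iff_ne_bot.2 hW, fun U hU => ?_⟩
      rcases hWirr (U.map W.subtype) (Submodule.map_subtype_le W U) (by
        rintro m hm _ ⟨u, hu, rfl⟩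
        exact ⟨σ ⟨m, hm⟩ u, hU ⟨m, hm⟩ ⟨u, hu, rfl⟩, rfl⟩) with h | h
      · left
        rw [eq_bot_iff]
        intro u hu
        have h1 : (u : V) ∈ U.map W.subtype := ⟨u, hu, rfl⟩
        rw [h, Submodule.mem_bot] at h1
        exact (Submodule.mem_bot ℚ).2 (Subtype.ext h1)
      · right
        rw [eq_top_iff]
        intro w _
        have h1 : (w : V) ∈ U.map W.subtype := h.symm.le w.2
        obtain ⟨u, hu, hu'⟩ := h1
        have : u = w := Subtype.ext hu'
        rwa [← this]
    have hntW : Nontrivial W := hσi.1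
    have hc : Nat.card M < n := by
      rw [← hn]
      refine lt_of_le_of_ne (Subgroup.card_le_card_group M) fun h => hM ?_
      exact Subgroup.eq_top_of_card_eq M h
    have key := ih _ hc M (hG.to_subgroup M) W σ hσi rfl
    have hW0 : Module.finrank ℚ W ≠ 0 := Module.finrank_pos.ne'
    have hν : (Module.finrank ℚ V).factorization p = e + (Module.finrank ℚ W).factorization p := by
      rw [hdim, he, Nat.factorization_mul (pow_ne_zero _ hp.ne_zero) hW0, Finsupp.add_apply,
        hp.factorization_pow, Finsupp.single_eq_same]
    have htriv : ∀ y ∈ pfratIter p (⊤ : Subgroup G) ((Module.finrank ℚ V).factorization p + 1),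
        ∀ w ∈ W, ρ y w = w := by
      intro y hy w hw
      rw [hν, add_assoc, pfratIter_add] at hy
      have h1 := pfratIter_mono (pfratIter_le_of_index hp hG e M he) _ hy
      have h2 : M ≤ (⊤ : Subgroup M).map M.subtype := fun m hm => ⟨⟨m, hm⟩, trivial, rfl⟩
      replace h1 := pfratIter_mono h2 _ h1
      obtain ⟨m, hm, rfl⟩ := pfratIter_le_map _ _ _ h1
      have h3 := key m hm
      have h4 := hσ m ⟨w, hw⟩
      rw [h3] at h4
      exact h4.symm
    have hle : (⊤ : Submodule ℚ V) ≤ LinearMap.ker (ρ g - 1) := by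
      rw [← htop]
      refine iSup_le fun h => ?_
      rintro _ ⟨w, hw, rfl⟩
      rw [LinearMap.mem_ker, LinearMap.sub_apply, sub_eq_zero, Module.End.one_apply]
      have h1 := htriv _ (conj_mem_pfratIter_top _ hg h⁻¹) w hw
      have h2 : g * h = h * (h⁻¹ * g * h⁻¹⁻¹) := by group
      rw [← Module.End.mul_apply, ← map_mul, h2, map_mul, Module.End.mul_apply, h1]
    rw [← sub_eq_zero]
    exact LinearMap.ker_eq_top.1 (top_le_iff.1 hle)

end final

/-- If a finite `p`-group `G` has a faithful irreducible representation on an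
`N`-dimensional rational vector space, then `𝓕(G) ≤ ν_p(N) + 1`. -/
theorem frattiniLength_le_of_faithful_irreducible_rat (p : ℕ) (hp : p.Prime)
    (G : Type*) [Group G] [Finite G] (hG : IsPGroup p G)
    (V : Type*) [AddCommGroup V] [Module ℚ V] [FiniteDimensional ℚ V]
    (ρ : Representation ℚ G V) (hfaith : Function.Injective ρ)
    (hirr : ρ.IsIrreducibleRep)
    (N : ℕ) (hN1 : 1 ≤ N) (hN : Module.finrank ℚ V = N) :
    frattiniLength G ≤ N.factorization p + 1 := by
  apply Nat.sInf_le
  change frattiniSeries G (N.factorization p + 1) = ⊥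
  rw [eq_bot_iff]
  intro g hg
  have h1 := frattiniSeries_le hp _ hg
  rw [← hN] at h1
  have h2 := main_ind hp _ G hG V ρ hirr rfl g h1
  rw [Subgroup.mem_bot]
  apply hfaith
  rw [h2, map_one]
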